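/- arXiv:0808.3402 — 2 statements merged into one kernel-verified Lean document; each statement's English description precedes it below -/
import Mathlib

section
/- Let ν > 0, k > 0, and let r_{ν,k} be as defined. Then lim_{t→0⁺} r_{ν,k}(t) = max(1 − k^{−2ν}, 0), i.e. the call price converges to (1 − K)^+ with K = k^{−2ν} as maturity tends to 0. -/
open MeasureTheory Real Filter Set Topology

/-- The modified Bessel function of the first kind, defined by its series:
`I_ν(y) = Σ_{j=0}^∞ (y/2)^{ν+2j} / (j!·Γ(ν+j+1))`. -/
noncomputable def besselI (ν y : ℝ) : ℝ :=
  ∑' j : ℕ, (y / 2) ^ (ν + 2 * (j : ℝ)) / ((Nat.factorial j : ℝ) * Real.Gamma (ν + (j : ℝ) + 1))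

/-- The explicit integral formula for the Bessel(δ) call price, `δ = 2ν+2`, strike `K = k^{−2ν}`:
`r_{ν,k}(t) = ν·k^{−ν}·∫_0^{k/t} y^{−1}·e^{−y/(2k)}·[ y^ν/(2^ν Γ(1+ν)) − e^{−ky/2}·I_ν(y) ] dy`. -/
noncomputable def rBes (ν k t : ℝ) : ℝ :=
  ν * k ^ (-ν) *
    ∫ y in (0:ℝ)..(k / t),
      y⁻¹ * Real.exp (-y / (2 * k)) *
        (y ^ ν / ((2:ℝ) ^ ν * Real.Gamma (1 + ν)) - Real.exp (-(k * y) / 2) * besselI ν y)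

/-! Everything rests on the Laplace transform
`∫_0^∞ y⁻¹ e^{-ay} I_ν(y) dy = q^ν / ν`, where `2a = q + q⁻¹` and `0 < q ≤ 1`. The integrand of
`r_{ν,k}` is the difference of a Gamma integral and this one at `2a = k + k⁻¹`, hence
`q = min k k⁻¹`; this minimum is the origin of the positive part in the limit.

Integrating the Bessel series termwise turns the transform into the generalized binomial series
`∑ (ν+2j choose j) z^j / (ν+2j) = (1-w)^{-ν} / ν`, where `z = w(1-w)`. To prove it, put
`G ν = ∑ (ν+2j choose j) z^j`. Pascal's rule `G (ν+1) = G ν + z G (ν+2)` says that the defect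
`D ν = (1-w) G (ν+1) - G ν` satisfies `D ν = w D (ν+1)`. As `ν` grows by one, `G` at most doubles,
so iterating and using `2w < 1` gives `D ν = 0`. This is exactly what makes the derivative of
`(1-w)^ν ∑ (ν+2j choose j) z^j / (ν+2j)` with respect to `w` vanish. The value `w = 1/2`,
which is needed at `k = 1`, follows by monotone convergence. -/

section Series

theorem hasSum_of_hasSum_of_le_of_tendsto {α ι : Type*} {l : Filter α} [l.NeBot]
    {f : α → ι → ℝ} {g : ι → ℝ} {s : α → ℝ} {S : ℝ} (hg : ∀ i, 0 ≤ g i)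
    (hf : ∀ᶠ a in l, ∀ i, 0 ≤ f a i) (hfg : ∀ᶠ a in l, ∀ i, f a i ≤ g i)
    (hs : ∀ᶠ a in l, HasSum (f a) (s a)) (hlim : ∀ i, Tendsto (f · i) l (𝓝 (g i)))
    (hS : Tendsto s l (𝓝 S)) : HasSum g S := by
  refine hasSum_of_isLUB_of_nonneg S hg ⟨?_, fun B hB => ?_⟩
  · rintro _ ⟨u, rfl⟩
    refine le_of_tendsto_of_tendsto (tendsto_finsetSum u fun i _ => hlim i) hS ?_
    filter_upwards [hf, hs] with a hfa hsa
    exact sum_le_hasSum u (fun i _ => hfa i) hsa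
  · refine le_of_tendsto hS ?_
    filter_upwards [hfg, hs] with a hfga hsa
    exact hasSum_le_of_sum_le hsa fun u =>
      (Finset.sum_le_sum fun i _ => hfga i).trans (hB (mem_range_self u))

theorem hasDerivAt_tsum_mul_pow {𝕜 : Type*} [RCLike 𝕜] {a : ℕ → 𝕜} {r : ℝ} {z : 𝕜}
    (ha : Summable fun j : ℕ => ((j : ℝ) + 1) * ‖a (j + 1)‖ * r ^ j) (hz : ‖z‖ < r) :
    HasDerivAt (fun z => ∑' j, a j * z ^ j) (∑' j : ℕ, ((j : 𝕜) + 1) * a (j + 1) * z ^ j) z := by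
  have hbound : ∀ (j : ℕ) (y : 𝕜), y ∈ Metric.ball 0 r →
      ‖a j * (j * y ^ (j - 1))‖ ≤ j * ‖a j‖ * r ^ (j - 1) := by
    intro j y hy
    rw [mem_ball_zero_iff] at hy
    calc ‖a j * (j * y ^ (j - 1))‖ = j * ‖a j‖ * ‖y‖ ^ (j - 1) := by
          simp only [norm_mul, norm_pow, RCLike.norm_natCast]; ring
      _ ≤ j * ‖a j‖ * r ^ (j - 1) := by gcongr
  have hsum : Summable fun j : ℕ => (j : ℝ) * ‖a j‖ * r ^ (j - 1) :=
    (summable_nat_add_iff 1).1 (by simpa using ha)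
  have hzball : z ∈ Metric.ball 0 r := mem_ball_zero_iff.2 hz
  have hr : 0 < r := (norm_nonneg z).trans_lt hz
  have hderiv := hasDerivAt_tsum_of_isPreconnected hsum Metric.isOpen_ball
    (convex_ball (0 : 𝕜) r).isPreconnected (fun j y _ => (hasDerivAt_pow j y).const_mul (a j))
    hbound (Metric.mem_ball_self hr)
    (summable_of_ne_finset_zero (s := {0}) fun j hj => by simp_all) hzball
  refine hderiv.congr_deriv ?_
  rw [(Summable.of_norm_bounded hsum fun j => hbound j z hzball).tsum_eq_zero_add]
  simp [mul_left_comm, mul_assoc]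

end Series

/-- The generalized binomial coefficient `(ν + 2j choose j)`, for real `ν > -1`, written with
Gamma functions so as to match the coefficients of the Bessel series. -/
noncomputable def shiftedCentralBinom (ν : ℝ) (j : ℕ) : ℝ :=
  Gamma (ν + 2 * j + 1) / (j.factorial * Gamma (ν + j + 1))

/-- The generating function `∑ (ν + 2j choose j) z^j` of the shifted central binomial coefficients,
of radius of convergence `1/4`. -/
noncomputable def shiftedCentralBinomSeries (ν z : ℝ) : ℝ :=
  ∑' j, shiftedCentralBinom ν j * z ^ j

/-- The series `∑ (ν + 2j choose j) z^j / (ν + 2j)`. It equals `C(z)^ν / ν`, where `C` is the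
generating function of the Catalan numbers; see `catalanRpowSeries_mul_one_sub`. -/
noncomputable def catalanRpowSeries (ν z : ℝ) : ℝ :=
  ∑' j : ℕ, shiftedCentralBinom ν j / (ν + 2 * j) * z ^ j

section ShiftedCentralBinom

variable {ν z w : ℝ}

theorem shiftedCentralBinom_pos (hν : -1 < ν) (j : ℕ) : 0 < shiftedCentralBinom ν j := by
  have : (0 : ℝ) ≤ j := j.cast_nonneg
  have hnum : 0 < Gamma (ν + 2 * j + 1) := Gamma_pos_of_pos (by linarith)
  have hden : 0 < Gamma (ν + j + 1) := Gamma_pos_of_pos (by linarith)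
  unfold shiftedCentralBinom
  positivity

theorem shiftedCentralBinom_zero (hν : -1 < ν) : shiftedCentralBinom ν 0 = 1 := by
  have : Gamma (ν + 1) ≠ 0 := (Gamma_pos_of_pos (by linarith)).ne'
  simp [shiftedCentralBinom, this]

theorem shiftedCentralBinom_add_one (hν : -1 < ν) (j : ℕ) :
    shiftedCentralBinom (ν + 1) j = (ν + 2 * j + 1) / (ν + j + 1) * shiftedCentralBinom ν j := by
  have : (0 : ℝ) ≤ j := j.cast_nonneg
  have hden : 0 < ν + j + 1 := by linarith
  have hnum : 0 < ν + 2 * j + 1 := by linarith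
  have hΓ : Gamma (ν + j + 1) ≠ 0 := (Gamma_pos_of_pos hden).ne'
  rw [shiftedCentralBinom, shiftedCentralBinom, add_right_comm ν 1, add_right_comm ν 1,
    Gamma_add_one hnum.ne', Gamma_add_one hden.ne']
  field_simp

theorem shiftedCentralBinom_succ (hν : -1 < ν) (j : ℕ) :
    shiftedCentralBinom ν (j + 1) =
      (ν + 2 * j + 2) / (j + 1) * shiftedCentralBinom (ν + 1) j := by
  have : (0 : ℝ) ≤ j := j.cast_nonneg
  have hΓ : Gamma (ν + j + 2) ≠ 0 := (Gamma_pos_of_pos (by linarith)).ne'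
  have hnum : Gamma (ν + 2 * (j + 1) + 1) = (ν + 2 * j + 2) * Gamma (ν + 2 * j + 2) := by
    rw [← Gamma_add_one (by linarith)]; ring_nf
  rw [shiftedCentralBinom, shiftedCentralBinom, Nat.factorial_succ]
  push_cast
  rw [hnum, show ν + (j + 1) + 1 = ν + j + 2 by ring,
    show ν + 1 + 2 * j + 1 = ν + 2 * j + 2 by ring, show ν + 1 + j + 1 = ν + j + 2 by ring]
  field_simp

theorem shiftedCentralBinom_pascal (hν : -1 < ν) (j : ℕ) :
    shiftedCentralBinom (ν + 1) (j + 1) =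
      shiftedCentralBinom ν (j + 1) + shiftedCentralBinom (ν + 2) j := by
  have : (0 : ℝ) ≤ j := j.cast_nonneg
  have hden : ν + j + 2 ≠ 0 := by linarith
  rw [show ν + 2 = ν + 1 + 1 by ring, shiftedCentralBinom_add_one hν,
    shiftedCentralBinom_add_one (ν := ν + 1) (by linarith), shiftedCentralBinom_succ hν]
  push_cast
  rw [show ν + (j + 1) + 1 = ν + j + 2 by ring, show ν + 1 + j + 1 = ν + j + 2 by ring]
  field_simp
  ring

theorem shiftedCentralBinom_add_one_le (hν : -1 < ν) (j : ℕ) :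
    shiftedCentralBinom (ν + 1) j ≤ 2 * shiftedCentralBinom ν j := by
  have : (0 : ℝ) ≤ j := j.cast_nonneg
  have hratio : (ν + 2 * j + 1) / (ν + j + 1) ≤ 2 := by
    rw [div_le_iff₀ (by linarith)]; linarith
  rw [shiftedCentralBinom_add_one hν]
  exact mul_le_mul_of_nonneg_right hratio (shiftedCentralBinom_pos hν j).le

theorem summable_shiftedCentralBinom_mul_pow (hν : -1 < ν) (hz : |z| < 1 / 4) :
    Summable fun j : ℕ => shiftedCentralBinom ν j * z ^ j := by
  have hratio : Tendsto (fun j : ℕ => (ν + 2 + 2 * (j : ℝ)) / (1 + 1 * j) *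
      ((ν + 1 + 2 * j) / (ν + 1 + 1 * j)) * |z|) atTop (𝓝 (2 / 1 * (2 / 1) * |z|)) :=
    ((tendsto_add_mul_div_add_mul_atTop_nhds _ _ _ one_ne_zero).mul
      (tendsto_add_mul_div_add_mul_atTop_nhds _ _ _ one_ne_zero)).mul_const _
  obtain ⟨r, hzr, hr⟩ := exists_between (show 2 / 1 * (2 / 1) * |z| < 1 by linarith)
  refine summable_of_ratio_norm_eventually_le hr ?_
  filter_upwards [hratio.eventually_le_const hzr] with j hj
  have hpos := shiftedCentralBinom_pos hν
  simp only [norm_mul, norm_pow, Real.norm_eq_abs, abs_of_pos (hpos _)]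
  calc shiftedCentralBinom ν (j + 1) * |z| ^ (j + 1)
      = (ν + 2 + 2 * j) / (1 + 1 * j) * ((ν + 1 + 2 * j) / (ν + 1 + 1 * j)) * |z| *
          (shiftedCentralBinom ν j * |z| ^ j) := by
        rw [shiftedCentralBinom_succ hν, shiftedCentralBinom_add_one hν]; ring_nf
    _ ≤ r * (shiftedCentralBinom ν j * |z| ^ j) :=
        mul_le_mul_of_nonneg_right hj (mul_nonneg (hpos j).le (by positivity))

theorem shiftedCentralBinomSeries_pascal (hν : -1 < ν) (hz : |z| < 1 / 4) :
    shiftedCentralBinomSeries (ν + 1) z =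
      shiftedCentralBinomSeries ν z + z * shiftedCentralBinomSeries (ν + 2) z := by
  have hs := summable_shiftedCentralBinom_mul_pow hν hz
  have hs₁ := summable_shiftedCentralBinom_mul_pow (ν := ν + 1) (by linarith) hz
  have hs₂ := summable_shiftedCentralBinom_mul_pow (ν := ν + 2) (by linarith) hz
  simp only [shiftedCentralBinomSeries]
  rw [hs₁.tsum_eq_zero_add, hs.tsum_eq_zero_add, shiftedCentralBinom_zero hν,
    shiftedCentralBinom_zero (by linarith), ← tsum_mul_left, add_assoc,
    ← ((summable_nat_add_iff 1).2 hs).tsum_add (hs₂.mul_left z)]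
  congr 1
  refine tsum_congr fun j => ?_
  rw [shiftedCentralBinom_pascal hν]
  ring

theorem shiftedCentralBinomSeries_nonneg (hν : -1 < ν) (hz : 0 ≤ z) :
    0 ≤ shiftedCentralBinomSeries ν z :=
  tsum_nonneg fun j => mul_nonneg (shiftedCentralBinom_pos hν j).le (by positivity)

theorem shiftedCentralBinomSeries_add_one_le (hν : -1 < ν) (hz₀ : 0 ≤ z) (hz : |z| < 1 / 4) :
    shiftedCentralBinomSeries (ν + 1) z ≤ 2 * shiftedCentralBinomSeries ν z := by
  rw [shiftedCentralBinomSeries, shiftedCentralBinomSeries, ← tsum_mul_left]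
  refine Summable.tsum_le_tsum (fun j => ?_)
    (summable_shiftedCentralBinom_mul_pow (by linarith) hz)
    ((summable_shiftedCentralBinom_mul_pow hν hz).mul_left 2)
  rw [← mul_assoc]
  exact mul_le_mul_of_nonneg_right (shiftedCentralBinom_add_one_le hν j) (by positivity)

theorem abs_mul_one_sub_lt_one_div_four (hw₀ : 0 ≤ w) (hw : w < 1 / 2) :
    |w * (1 - w)| < 1 / 4 := by
  rw [abs_of_nonneg (mul_nonneg hw₀ (by linarith))]
  nlinarith [mul_pos (sub_pos.2 hw) (sub_pos.2 hw)]

theorem abs_shiftedCentralBinomSeries_defect_le (hν : -1 < ν) (hw₀ : 0 ≤ w) (hw : w < 1 / 2)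
    (n : ℕ) :
    |(1 - w) * shiftedCentralBinomSeries (ν + 1) (w * (1 - w)) -
        shiftedCentralBinomSeries ν (w * (1 - w))| ≤
      (2 * w) ^ n * shiftedCentralBinomSeries ν (w * (1 - w)) := by
  have hz₀ : 0 ≤ w * (1 - w) := mul_nonneg hw₀ (by linarith)
  have hz := abs_mul_one_sub_lt_one_div_four hw₀ hw
  induction n generalizing ν with
  | zero =>
    have hG₁ := shiftedCentralBinomSeries_nonneg (ν := ν + 1) (by linarith) hz₀
    have hle := shiftedCentralBinomSeries_add_one_le hν hz₀ hz
    rw [pow_zero, one_mul, abs_le]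
    constructor <;> nlinarith
  | succ n ih =>
    let G := fun μ => shiftedCentralBinomSeries μ (w * (1 - w))
    have hpascal : G (ν + 1) = G ν + w * (1 - w) * G (ν + 2) :=
      shiftedCentralBinomSeries_pascal hν hz
    have hstep : (1 - w) * G (ν + 1) - G ν = w * ((1 - w) * G (ν + 1 + 1) - G (ν + 1)) := by
      rw [add_assoc ν 1 1, one_add_one_eq_two]
      linear_combination hpascal
    calc |(1 - w) * G (ν + 1) - G ν|
        = w * |(1 - w) * G (ν + 1 + 1) - G (ν + 1)| := by
          rw [hstep, abs_mul, abs_of_nonneg hw₀]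
      _ ≤ w * ((2 * w) ^ n * G (ν + 1)) := by gcongr; exact ih (by linarith)
      _ ≤ w * ((2 * w) ^ n * (2 * G ν)) := by
          gcongr; exact shiftedCentralBinomSeries_add_one_le hν hz₀ hz
      _ = (2 * w) ^ (n + 1) * G ν := by ring

theorem one_sub_mul_shiftedCentralBinomSeries_add_one (hν : -1 < ν) (hw₀ : 0 ≤ w)
    (hw : w < 1 / 2) :
    (1 - w) * shiftedCentralBinomSeries (ν + 1) (w * (1 - w)) =
      shiftedCentralBinomSeries ν (w * (1 - w)) := by
  have hdecay := (tendsto_pow_atTop_nhds_zero_of_lt_one (r := 2 * w) (by linarith)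
    (by linarith)).mul_const (shiftedCentralBinomSeries ν (w * (1 - w)))
  rw [zero_mul] at hdecay
  have hdefect := ge_of_tendsto' hdecay fun n =>
    abs_shiftedCentralBinomSeries_defect_le hν hw₀ hw n
  exact sub_eq_zero.1 (abs_nonpos_iff.1 hdefect)

theorem summable_shiftedCentralBinom_div_mul_pow (hν : 0 < ν) (hz : |z| < 1 / 4) :
    Summable fun j : ℕ => shiftedCentralBinom ν j / (ν + 2 * j) * z ^ j := by
  have hs := summable_shiftedCentralBinom_mul_pow (ν := ν) (by linarith) hz
  refine (hs.norm.div_const ν).of_norm_bounded fun j => ?_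
  rw [div_mul_eq_mul_div, norm_div, Real.norm_of_nonneg (by positivity : 0 ≤ ν + 2 * (j : ℝ))]
  gcongr
  exact le_add_of_nonneg_right (by positivity)

theorem succ_mul_shiftedCentralBinom_div (hν : -1 < ν) (j : ℕ) :
    ((j : ℝ) + 1) * (shiftedCentralBinom ν (j + 1) / (ν + 2 * (j + 1 : ℕ))) =
      shiftedCentralBinom (ν + 1) j := by
  have : (0 : ℝ) ≤ j := j.cast_nonneg
  have hden : ν + 2 * (j + 1 : ℕ) ≠ 0 := by push_cast; linarith
  rw [← mul_div_assoc, div_eq_iff hden, shiftedCentralBinom_succ hν]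
  push_cast
  field_simp
  ring

theorem hasDerivAt_catalanRpowSeries (hν : -1 < ν) (hz : |z| < 1 / 4) :
    HasDerivAt (catalanRpowSeries ν) (shiftedCentralBinomSeries (ν + 1) z) z := by
  obtain ⟨r, hzr, hr⟩ := exists_between hz
  have hr₀ : 0 < r := (abs_nonneg z).trans_lt hzr
  refine (hasDerivAt_tsum_mul_pow (r := r) ?_ hzr).congr_deriv ?_
  · refine (summable_shiftedCentralBinom_mul_pow (ν := ν + 1) (by linarith)
      (by rwa [abs_of_pos hr₀])).congr fun j => ?_
    have hden : 0 ≤ ν + 2 * (j + 1 : ℕ) := by push_cast; linarith [(j.cast_nonneg : (0 : ℝ) ≤ j)]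
    rw [Real.norm_of_nonneg (div_nonneg (shiftedCentralBinom_pos hν _).le hden),
      succ_mul_shiftedCentralBinom_div hν]
  · exact tsum_congr fun j => by rw [succ_mul_shiftedCentralBinom_div hν]

theorem mul_catalanRpowSeries (hν : 0 < ν) (hz : |z| < 1 / 4) :
    ν * catalanRpowSeries ν z =
      shiftedCentralBinomSeries ν z - 2 * z * shiftedCentralBinomSeries (ν + 1) z := by
  have hs := summable_shiftedCentralBinom_mul_pow (ν := ν) (by linarith) hz
  have hs₁ := summable_shiftedCentralBinom_mul_pow (ν := ν + 1) (by linarith) hz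
  have hdiv := (summable_shiftedCentralBinom_div_mul_pow hν hz).mul_left ν
  rw [eq_sub_iff_add_eq, catalanRpowSeries, shiftedCentralBinomSeries, shiftedCentralBinomSeries,
    ← tsum_mul_left, ← tsum_mul_left, hdiv.tsum_eq_zero_add, hs.tsum_eq_zero_add, add_assoc,
    ← ((summable_nat_add_iff 1).2 hdiv).tsum_add (hs₁.mul_left (2 * z))]
  congr 1
  · simp [field]
  · refine tsum_congr fun j => ?_
    have hden : ν + 2 * (j + 1 : ℕ) ≠ 0 := by positivity
    rw [← succ_mul_shiftedCentralBinom_div (by linarith)]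
    field_simp
    push_cast
    ring

theorem catalanRpowSeries_zero (hν : -1 < ν) : catalanRpowSeries ν 0 = 1 / ν := by
  rw [catalanRpowSeries, tsum_eq_single 0 fun j hj => by simp [hj]]
  simp [shiftedCentralBinom_zero hν]

theorem hasDerivAt_one_sub_rpow_mul_catalanRpowSeries (hν : 0 < ν) (hw₀ : 0 ≤ w)
    (hw : w < 1 / 2) :
    HasDerivAt (fun w => (1 - w) ^ ν * catalanRpowSeries ν (w * (1 - w))) 0 w := by
  have hν' : -1 < ν := by linarith
  have hz := abs_mul_one_sub_lt_one_div_four hw₀ hw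
  have hbase : 1 - w ≠ 0 := by linarith
  have hsub : HasDerivAt (fun w => 1 - w) (-1) w := by simpa using (hasDerivAt_id w).const_sub 1
  have hinner : HasDerivAt (fun w => w * (1 - w)) (1 - 2 * w) w :=
    ((hasDerivAt_id' w).mul hsub).congr_deriv (by ring)
  have hcomp := (hasDerivAt_catalanRpowSeries hν' hz).comp w hinner
  have hvalue := mul_catalanRpowSeries hν hz
  rw [← one_sub_mul_shiftedCentralBinomSeries_add_one hν' hw₀ hw] at hvalue
  refine ((hsub.rpow_const (p := ν) (Or.inl hbase)).mul hcomp).congr_deriv ?_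
  rw [rpow_sub_one hbase]
  simp only [Function.comp_apply]
  field_simp
  linear_combination -(1 - w) ^ ν * hvalue

theorem catalanRpowSeries_mul_one_sub (hν : 0 < ν) (hw₀ : 0 ≤ w) (hw : w < 1 / 2) :
    catalanRpowSeries ν (w * (1 - w)) = (1 - w) ^ (-ν) / ν := by
  have hderiv (x : ℝ) (hx : x ∈ Icc 0 w) :=
    hasDerivAt_one_sub_rpow_mul_catalanRpowSeries hν hx.1 (hx.2.trans_lt hw)
  have hconst := constant_of_has_deriv_right_zero (HasDerivAt.continuousOn hderiv)
    (fun x hx => (hderiv x (Ico_subset_Icc_self hx)).hasDerivWithinAt) w ⟨hw₀, le_rfl⟩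
  have hbase : 0 < 1 - w := by linarith
  have hpow : (1 - w) ^ ν ≠ 0 := by positivity
  rw [sub_zero, one_rpow, zero_mul, catalanRpowSeries_zero (by linarith), one_mul] at hconst
  rw [rpow_neg hbase.le]
  field_simp at hconst ⊢
  exact hconst

theorem hasSum_shiftedCentralBinom_div_mul_pow (hν : 0 < ν) (hw₀ : 0 ≤ w) (hw : w ≤ 1 / 2) :
    HasSum (fun j : ℕ => shiftedCentralBinom ν j / (ν + 2 * j) * (w * (1 - w)) ^ j)
      ((1 - w) ^ (-ν) / ν) := by
  have hcoeff (j : ℕ) : 0 ≤ shiftedCentralBinom ν j / (ν + 2 * j) :=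
    div_nonneg (shiftedCentralBinom_pos (by linarith) j).le (by positivity)
  have hinterior {x : ℝ} (hx₀ : 0 ≤ x) (hx : x < 1 / 2) :
      HasSum (fun j : ℕ => shiftedCentralBinom ν j / (ν + 2 * j) * (x * (1 - x)) ^ j)
        ((1 - x) ^ (-ν) / ν) := by
    rw [← catalanRpowSeries_mul_one_sub hν hx₀ hx]
    exact (summable_shiftedCentralBinom_div_mul_pow hν
      (abs_mul_one_sub_lt_one_div_four hx₀ hx)).hasSum
  rcases hw.lt_or_eq with hw | rfl
  · exact hinterior hw₀ hw
  have hmem : ∀ᶠ x : ℝ in 𝓝[<] (1 / 2), x ∈ Ioo 0 (1 / 2) := Ioo_mem_nhdsLT (by norm_num)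
  refine hasSum_of_hasSum_of_le_of_tendsto (l := 𝓝[<] (1 / 2 : ℝ))
    (f := fun x j => shiftedCentralBinom ν j / (ν + 2 * j) * (x * (1 - x)) ^ j)
    (s := fun x => (1 - x) ^ (-ν) / ν)
    (fun j => mul_nonneg (hcoeff j) (by norm_num)) ?_ ?_ ?_ (fun j => ?_) ?_
  · filter_upwards [hmem] with x hx j
    exact mul_nonneg (hcoeff j) (pow_nonneg (mul_nonneg hx.1.le (by linarith [hx.2])) j)
  · filter_upwards [hmem] with x hx j
    have hle : x * (1 - x) ≤ 1 / 2 * (1 - 1 / 2) := by nlinarith [sq_nonneg (x - 1 / 2)]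
    exact mul_le_mul_of_nonneg_left
      (pow_le_pow_left₀ (mul_nonneg hx.1.le (by linarith [hx.2])) hle j) (hcoeff j)
  · filter_upwards [hmem] with x hx using hinterior hx.1.le hx.2
  · exact (by fun_prop : Continuous fun x : ℝ => shiftedCentralBinom ν j / (ν + 2 * j) *
      (x * (1 - x)) ^ j).continuousWithinAt
  · have : ContinuousAt (fun x : ℝ => (1 - x) ^ (-ν) / ν) (1 / 2) :=
      (ContinuousAt.rpow_const (by fun_prop) (Or.inl (by norm_num))).div_const ν
    exact this.continuousWithinAt

end ShiftedCentralBinom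

section Laplace

/-- The `j`-th term `(y/2)^{ν+2j} / (j!·Γ(ν+j+1))` of the series defining `besselI ν y`. -/
noncomputable def besselITerm (ν : ℝ) (j : ℕ) (y : ℝ) : ℝ :=
  (y / 2) ^ (ν + 2 * (j : ℝ)) / (j.factorial * Gamma (ν + j + 1))

variable {ν a p k : ℝ}

theorem besselITerm_nonneg (hν : -1 < ν) (j : ℕ) {y : ℝ} (hy : 0 ≤ y) :
    0 ≤ besselITerm ν j y := by
  have : 0 < Gamma (ν + j + 1) :=
    Gamma_pos_of_pos (by linarith [(j.cast_nonneg : (0 : ℝ) ≤ j)])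
  unfold besselITerm
  positivity

theorem integrableOn_rpow_sub_one_mul_exp_neg_mul {s : ℝ} (hs : 0 < s) (ha : 0 < a) :
    IntegrableOn (fun y : ℝ => y ^ (s - 1) * exp (-(a * y))) (Ioi 0) := by
  have := integrableOn_rpow_mul_exp_neg_mul_rpow (show -1 < s - 1 by linarith) one_pos ha
  simpa only [rpow_one, neg_mul] using this

theorem inv_mul_exp_mul_besselITerm (j : ℕ) {y : ℝ} (hy : 0 < y) :
    y⁻¹ * exp (-(a * y)) * besselITerm ν j y =
      (1 / 2) ^ (ν + 2 * (j : ℝ)) / (j.factorial * Gamma (ν + j + 1)) *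
        (y ^ (ν + 2 * (j : ℝ) - 1) * exp (-(a * y))) := by
  rw [besselITerm, div_eq_mul_one_div y 2, mul_rpow hy.le (by norm_num), rpow_sub_one hy.ne']
  ring

theorem integrableOn_inv_mul_exp_mul_besselITerm (hν : 0 < ν) (ha : 0 < a) (j : ℕ) :
    IntegrableOn (fun y => y⁻¹ * exp (-(a * y)) * besselITerm ν j y) (Ioi 0) :=
  IntegrableOn.congr_fun
    ((integrableOn_rpow_sub_one_mul_exp_neg_mul (s := ν + 2 * j) (by positivity) ha).const_mul _)
    (fun _ hy => (inv_mul_exp_mul_besselITerm j hy).symm) measurableSet_Ioi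

theorem integral_inv_mul_exp_mul_besselITerm (hν : 0 < ν) (ha : 0 < a) (j : ℕ) :
    ∫ y in Ioi 0, y⁻¹ * exp (-(a * y)) * besselITerm ν j y =
      (1 / (2 * a)) ^ ν * (shiftedCentralBinom ν j / (ν + 2 * j) * ((1 / (2 * a)) ^ 2) ^ j) := by
  have hs : 0 < ν + 2 * (j : ℝ) := by positivity
  rw [setIntegral_congr_fun measurableSet_Ioi fun _ hy => inv_mul_exp_mul_besselITerm j hy,
    integral_const_mul, integral_rpow_mul_exp_neg_mul_Ioi hs ha, shiftedCentralBinom,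
    Gamma_add_one hs.ne']
  have hpow : (1 / 2 : ℝ) ^ (ν + 2 * (j : ℝ)) * (1 / a) ^ (ν + 2 * (j : ℝ)) =
      (1 / (2 * a)) ^ ν * ((1 / (2 * a)) ^ 2) ^ j := by
    rw [← mul_rpow (by norm_num) (by positivity), one_div_mul_one_div, rpow_add (by positivity),
      ← pow_mul, ← rpow_natCast _ (2 * j)]
    push_cast
    rfl
  calc _ = ((1 / 2 : ℝ) ^ (ν + 2 * (j : ℝ)) * (1 / a) ^ (ν + 2 * (j : ℝ))) *
        (Gamma (ν + 2 * j) / (j.factorial * Gamma (ν + j + 1))) := by ring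
    _ = _ := by rw [hpow]; field_simp

theorem hasSum_integral_inv_mul_exp_mul_besselITerm (hν : 0 < ν) (hp₀ : 0 < p) (hp : p ≤ 1) :
    HasSum (fun j => ∫ y in Ioi 0, y⁻¹ * exp (-((p + p⁻¹) / 2 * y)) * besselITerm ν j y)
      (p ^ ν / ν) := by
  have hw : p ^ 2 / (1 + p ^ 2) ≤ 1 / 2 := by
    rw [div_le_div_iff₀ (by positivity) two_pos]; nlinarith
  have hsum := (hasSum_shiftedCentralBinom_div_mul_pow hν (by positivity) hw).mul_left
    ((p / (1 + p ^ 2)) ^ ν)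
  have hbase : 1 / (2 * ((p + p⁻¹) / 2)) = p / (1 + p ^ 2) := by field_simp; ring
  have hone_sub : 1 - p ^ 2 / (1 + p ^ 2) = (1 + p ^ 2)⁻¹ := by field_simp; ring
  have hz : p ^ 2 / (1 + p ^ 2) * (1 + p ^ 2)⁻¹ = (p / (1 + p ^ 2)) ^ 2 := by ring
  have hlimit : (p / (1 + p ^ 2)) ^ ν * ((1 + p ^ 2)⁻¹ ^ (-ν) / ν) = p ^ ν / ν := by
    rw [rpow_neg (by positivity), inv_rpow (by positivity), inv_inv,
      div_rpow hp₀.le (by positivity)]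
    have : (1 + p ^ 2) ^ ν ≠ 0 := by positivity
    field_simp
  rw [hone_sub, hz, hlimit] at hsum
  refine hsum.congr_fun fun j => ?_
  rw [integral_inv_mul_exp_mul_besselITerm hν (by positivity), hbase]

theorem integral_inv_mul_exp_mul_besselI_of_le_one (hν : 0 < ν) (hp₀ : 0 < p) (hp : p ≤ 1) :
    ∫ y in Ioi 0, y⁻¹ * exp (-((p + p⁻¹) / 2 * y)) * besselI ν y = p ^ ν / ν := by
  have hsum := hasSum_integral_inv_mul_exp_mul_besselITerm hν hp₀ hp
  have hnorm (j : ℕ) : ∫ y in Ioi 0, y⁻¹ * exp (-((p + p⁻¹) / 2 * y)) * besselITerm ν j y =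
      ∫ y in Ioi 0, ‖y⁻¹ * exp (-((p + p⁻¹) / 2 * y)) * besselITerm ν j y‖ := by
    refine setIntegral_congr_fun measurableSet_Ioi fun y (hy : 0 < y) => ?_
    have := besselITerm_nonneg (ν := ν) (by linarith) j hy.le
    exact (Real.norm_of_nonneg (by positivity)).symm
  have hswap := hasSum_integral_of_summable_integral_norm
    (integrableOn_inv_mul_exp_mul_besselITerm hν (by positivity)) (hsum.summable.congr hnorm)
  simp only [tsum_mul_left] at hswap
  exact hswap.unique hsum

theorem integral_inv_mul_exp_mul_besselI (hν : 0 < ν) (hp : 0 < p) :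
    ∫ y in Ioi 0, y⁻¹ * exp (-((p + p⁻¹) / 2 * y)) * besselI ν y = min p p⁻¹ ^ ν / ν := by
  rcases le_total p 1 with h | h
  · rw [min_eq_left (h.trans ((one_le_inv₀ hp).2 h)),
      integral_inv_mul_exp_mul_besselI_of_le_one hν hp h]
  · have hinv : p⁻¹ ≤ 1 := inv_le_one_of_one_le₀ h
    rw [min_eq_right (hinv.trans h),
      ← integral_inv_mul_exp_mul_besselI_of_le_one hν (inv_pos.2 hp) hinv, inv_inv, add_comm]

theorem integrableOn_inv_mul_exp_mul_besselI (hν : 0 < ν) (hp : 0 < p) :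
    IntegrableOn (fun y => y⁻¹ * exp (-((p + p⁻¹) / 2 * y)) * besselI ν y) (Ioi 0) := by
  refine Integrable.of_integral_ne_zero ?_
  rw [integral_inv_mul_exp_mul_besselI hν hp]
  have : 0 < min p p⁻¹ := lt_min hp (inv_pos.2 hp)
  positivity

end Laplace

section CallPrice

/-- The integrand of `rBes ν k t`, which does not depend on the maturity `t`. -/
noncomputable def rBesIntegrand (ν k y : ℝ) : ℝ :=
  y⁻¹ * exp (-y / (2 * k)) *
    (y ^ ν / (2 ^ ν * Gamma (1 + ν)) - exp (-(k * y) / 2) * besselI ν y)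

variable {ν k : ℝ}

theorem rBesIntegrand_eq_sub (hk : k ≠ 0) {y : ℝ} (hy : 0 < y) :
    rBesIntegrand ν k y = 1 / (2 ^ ν * Gamma (1 + ν)) *
      (y ^ (ν - 1) * exp (-(1 / (2 * k) * y))) -
        y⁻¹ * exp (-((k + k⁻¹) / 2 * y)) * besselI ν y := by
  have hexp : exp (-((k + k⁻¹) / 2 * y)) = exp (-y / (2 * k)) * exp (-(k * y) / 2) := by
    rw [← exp_add]; congr 1; field_simp; ring
  rw [rBesIntegrand, hexp, rpow_sub_one hy.ne', show -(1 / (2 * k) * y) = -y / (2 * k) by ring]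
  ring

theorem integral_rpow_sub_one_mul_exp_div (hν : 0 < ν) (hk : 0 < k) :
    ∫ y in Ioi 0, 1 / (2 ^ ν * Gamma (1 + ν)) * (y ^ (ν - 1) * exp (-(1 / (2 * k) * y))) =
      k ^ ν / ν := by
  have : 0 < Gamma ν := Gamma_pos_of_pos hν
  rw [integral_const_mul, integral_rpow_mul_exp_neg_mul_Ioi hν (by positivity), add_comm 1 ν,
    Gamma_add_one hν.ne', one_div_one_div, mul_rpow two_pos.le hk.le]
  field_simp

theorem integrableOn_rBesIntegrand (hν : 0 < ν) (hk : 0 < k) :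
    IntegrableOn (rBesIntegrand ν k) (Ioi 0) := by
  have hgamma := (integrableOn_rpow_sub_one_mul_exp_neg_mul hν
    (a := 1 / (2 * k)) (by positivity)).const_mul (1 / (2 ^ ν * Gamma (1 + ν)))
  exact IntegrableOn.congr_fun (hgamma.sub (integrableOn_inv_mul_exp_mul_besselI hν hk))
    (fun _ hy => (rBesIntegrand_eq_sub hk.ne' hy).symm) measurableSet_Ioi

theorem integral_rBesIntegrand (hν : 0 < ν) (hk : 0 < k) :
    ∫ y in Ioi 0, rBesIntegrand ν k y = (k ^ ν - min k k⁻¹ ^ ν) / ν := by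
  have hgamma := (integrableOn_rpow_sub_one_mul_exp_neg_mul hν
    (a := 1 / (2 * k)) (by positivity)).const_mul (1 / (2 ^ ν * Gamma (1 + ν)))
  rw [setIntegral_congr_fun measurableSet_Ioi fun _ hy => rBesIntegrand_eq_sub hk.ne' hy,
    integral_sub hgamma (integrableOn_inv_mul_exp_mul_besselI hν hk),
    integral_rpow_sub_one_mul_exp_div hν hk, integral_inv_mul_exp_mul_besselI hν hk, sub_div]

theorem rpow_neg_mul_rpow_sub_min_rpow (hν : 0 ≤ ν) (hk : 0 < k) :
    k ^ (-ν) * (k ^ ν - min k k⁻¹ ^ ν) = max (1 - k ^ (-(2 * ν))) 0 := by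
  have hself : k ^ (-ν) * k ^ ν = 1 := by rw [← rpow_add hk, neg_add_cancel, rpow_zero]
  have hsq : k ^ (-(2 * ν)) = k ^ (-ν) * k⁻¹ ^ ν := by
    rw [inv_rpow hk.le, ← rpow_neg hk.le, ← rpow_add hk]; ring_nf
  rcases le_total k 1 with h | h
  · have hle := one_le_rpow_of_pos_of_le_one_of_nonpos hk h (by linarith : -(2 * ν) ≤ 0)
    rw [min_eq_left (h.trans ((one_le_inv₀ hk).2 h)), sub_self, mul_zero,
      max_eq_right (by linarith)]
  · have hle := rpow_le_one_of_one_le_of_nonpos h (by linarith : -(2 * ν) ≤ 0)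
    rw [min_eq_right ((inv_le_one_of_one_le₀ h).trans h), max_eq_left (by linarith), mul_sub,
      hself, hsq]

end CallPrice

theorem stmt_9 (ν k : ℝ) (hν : 0 < ν) (hk : 0 < k) :
    Filter.Tendsto (fun t : ℝ => rBes ν k t) (nhdsWithin 0 (Set.Ioi 0))
      (nhds (max (1 - k ^ (-(2 * ν))) 0)) := by
  have hupper : Tendsto (fun t => k / t) (𝓝[>] 0) atTop := by
    simpa only [div_eq_mul_inv] using tendsto_inv_nhdsGT_zero.const_mul_atTop hk
  have hlim : Tendsto (fun t => rBes ν k t) (𝓝[>] 0)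
      (𝓝 (ν * k ^ (-ν) * ∫ y in Ioi 0, rBesIntegrand ν k y)) :=
    (intervalIntegral_tendsto_integral_Ioi 0 (integrableOn_rBesIntegrand hν hk) hupper).const_mul _
  have hvalue : ν * k ^ (-ν) * ∫ y in Ioi 0, rBesIntegrand ν k y = max (1 - k ^ (-(2 * ν))) 0 := by
    rw [integral_rBesIntegrand hν hk, ← rpow_neg_mul_rpow_sub_min_rpow hν.le hk]
    field_simp
  exact hvalue ▸ hlim
end

section
/- Let ν > 0 and k = 1, and let r_{ν,1} be as defined, i.e. r_{ν,1}(t) = ν·∫_0^{1/t} y^{−1}·e^{−y/2}·[ y^ν/(2^ν Γ(1+ν)) − e^{−y/2}·I_ν(y) ] dy. Then lim_{t→0⁺} r_{ν,1}(t)/√t = 2ν/√(2π), i.e. r_{ν,1}(t) ∼ √t·(2ν)/√(2π) as t → 0⁺. -/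
open MeasureTheory Real Filter Set Topology

/-!
Poisson's integral, obtained by integrating the series of `cosh` against a beta density term by
term, exhibits `e^{-y} I_ν(y)` as `y^ν` times the Laplace transform of the kernel
`(x (2 - x))^(ν - 1/2)` on `(0, 2)`, up to a constant. Two facts follow.

* By Fubini and the beta integral, `∫₀^∞ y⁻¹ e^{-y} I_ν(y) dy = 1 / ν`, which is also the value of
  `∫₀^∞ y^(ν - 1) e^{-y/2} dy / (2^ν Γ(1 + ν))`. So for `k = 1` the integrand of the call price has
  total integral zero, and the price is `-ν` times the integral over the tail `(1/t, ∞)`.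
* By Watson's lemma, `e^{-y} I_ν(y) ~ (2πy)^(-1/2)`. So the integrand is asymptotic to
  `-(2π)^(-1/2) y^(-3/2)`, whose tail integral from `1/t` is `-2 √t / √(2π)`.
-/

section Laplace

variable {E : Type*} [NormedAddCommGroup E] [NormedSpace ℝ E] {f h : ℝ → E} {a s δ y : ℝ} {c : E}

/-- The Laplace transform `∫₀^∞ e^{-xy} f(x) dx` of a function on the half-line `(0, ∞)`. -/
noncomputable def laplace (f : ℝ → E) (y : ℝ) : E :=
  ∫ x in Ioi 0, exp (-(x * y)) • f x

lemma integrableOn_exp_neg_mul_smul (hf : IntegrableOn f (Ioi 0)) (hy : 0 ≤ y) :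
    IntegrableOn (fun x ↦ exp (-(x * y)) • f x) (Ioi 0) := by
  refine Integrable.bdd_smul (C := 1) hf (by fun_prop) ?_
  filter_upwards [ae_restrict_mem measurableSet_Ioi] with x hx
  rw [norm_of_nonneg (exp_pos _).le, exp_le_one_iff]
  exact neg_nonpos.2 (mul_nonneg (le_of_lt hx) hy)

lemma exp_neg_mul_rpow_smul_inv_mul (h : ℝ → E) (a : ℝ) (hy : 0 < y) {z : ℝ} (hz : 0 < z) :
    (exp (-z) * z ^ a) • h (y⁻¹ * z) =
      y ^ a • exp (-(y⁻¹ * z * y)) • (y⁻¹ * z) ^ a • h (y⁻¹ * z) := by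
  rw [mul_rpow (by positivity) hz.le, inv_rpow hy.le, mul_right_comm y⁻¹, inv_mul_cancel₀ hy.ne',
    one_mul, smul_smul, smul_smul]
  congr 1
  field_simp

lemma integrableOn_exp_neg_mul_rpow_smul (hf : IntegrableOn (fun x ↦ x ^ a • h x) (Ioi 0))
    (hy : 0 < y) : IntegrableOn (fun z ↦ (exp (-z) * z ^ a) • h (y⁻¹ * z)) (Ioi 0) := by
  have hscale := (integrableOn_Ioi_comp_mul_left_iff
    (fun x ↦ exp (-(x * y)) • x ^ a • h x) 0 (inv_pos.2 hy)).2
      (by simpa only [mul_zero] using integrableOn_exp_neg_mul_smul hf hy.le)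
  exact IntegrableOn.congr_fun (hscale.smul (y ^ a))
    (fun z hz ↦ (exp_neg_mul_rpow_smul_inv_mul h a hy hz).symm) measurableSet_Ioi

lemma rpow_add_one_smul_laplace (h : ℝ → E) (a : ℝ) (hy : 0 < y) :
    y ^ (a + 1) • laplace (fun x ↦ x ^ a • h x) y =
      ∫ z in Ioi 0, (exp (-z) * z ^ a) • h (y⁻¹ * z) := by
  have hscale := integral_comp_mul_left_Ioi (fun x ↦ exp (-(x * y)) • x ^ a • h x) 0
    (inv_pos.2 hy)
  rw [mul_zero, inv_inv] at hscale
  rw [laplace, rpow_add_one hy.ne', mul_smul, ← hscale, ← integral_smul]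
  exact setIntegral_congr_fun measurableSet_Ioi
    fun z hz ↦ (exp_neg_mul_rpow_smul_inv_mul h a hy hz).symm

lemma integrableOn_exp_neg_mul_rpow (ha : -1 < a) :
    IntegrableOn (fun z ↦ exp (-z) * z ^ a) (Ioi 0) := by
  simpa only [add_sub_cancel_right] using GammaIntegral_convergent (s := a + 1) (by linarith)

lemma tendsto_rpow_smul_laplace_of_norm_le [CompleteSpace E] (ha : -1 < a)
    (hf : IntegrableOn (fun x ↦ x ^ a • h x) (Ioi 0)) {M : ℝ} (hM : ∀ x, ‖h x‖ ≤ M)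
    (hc : Tendsto h (𝓝[>] 0) (𝓝 c)) :
    Tendsto (fun y ↦ y ^ (a + 1) • laplace (fun x ↦ x ^ a • h x) y) atTop
      (𝓝 (Gamma (a + 1) • c)) := by
  have hGamma : Gamma (a + 1) • c = ∫ z in Ioi 0, (exp (-z) * z ^ a) • c := by
    rw [integral_smul_const, Gamma_eq_integral (by linarith), add_sub_cancel_right]
  have hdom : Tendsto (fun y ↦ ∫ z in Ioi 0, (exp (-z) * z ^ a) • h (y⁻¹ * z)) atTop
      (𝓝 (∫ z in Ioi 0, (exp (-z) * z ^ a) • c)) := by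
    refine tendsto_integral_filter_of_dominated_convergence (fun z ↦ exp (-z) * z ^ a * M)
      ?_ ?_ ((integrableOn_exp_neg_mul_rpow ha).mul_const M) ?_
    · filter_upwards [eventually_gt_atTop 0] with y hy
      exact (integrableOn_exp_neg_mul_rpow_smul hf hy).aestronglyMeasurable
    · refine .of_forall fun y ↦ ?_
      filter_upwards [ae_restrict_mem measurableSet_Ioi] with z hz
      have hz : 0 < z := hz
      rw [norm_smul, norm_of_nonneg (by positivity)]
      gcongr
      exact hM _
    · filter_upwards [ae_restrict_mem measurableSet_Ioi] with z hz
      refine (hc.comp (tendsto_nhdsWithin_iff.2 ⟨?_, ?_⟩)).const_smul _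
      · simpa only [zero_mul] using tendsto_inv_atTop_zero.mul_const z
      · filter_upwards [eventually_gt_atTop 0] with y hy using mul_pos (inv_pos.2 hy) hz
  rw [hGamma]
  refine hdom.congr' ?_
  filter_upwards [eventually_gt_atTop 0] with y hy using (rpow_add_one_smul_laplace h a hy).symm

lemma norm_setIntegral_Ioi_exp_neg_mul_smul_le (hf : IntegrableOn f (Ioi δ)) (hy : 0 ≤ y) :
    ‖∫ x in Ioi δ, exp (-(x * y)) • f x‖ ≤ exp (-(δ * y)) * ∫ x in Ioi δ, ‖f x‖ := by
  rw [← integral_const_mul]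
  refine norm_integral_le_of_norm_le (hf.norm.const_mul _) ?_
  filter_upwards [ae_restrict_mem measurableSet_Ioi] with x hx
  have hx : δ < x := hx
  rw [norm_smul, norm_of_nonneg (exp_pos _).le]
  gcongr

lemma tendsto_rpow_smul_setIntegral_Ioi_exp_neg_mul (hf : IntegrableOn f (Ioi δ)) (hδ : 0 < δ)
    (s : ℝ) :
    Tendsto (fun y ↦ y ^ s • ∫ x in Ioi δ, exp (-(x * y)) • f x) atTop (𝓝 0) := by
  have hexp := (tendsto_rpow_mul_exp_neg_mul_atTop_nhds_zero s δ hδ).mul_const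
    (∫ x in Ioi δ, ‖f x‖)
  rw [zero_mul] at hexp
  refine squeeze_zero_norm' ?_ hexp
  filter_upwards [eventually_ge_atTop 0] with y hy
  rw [norm_smul, norm_of_nonneg (by positivity), mul_assoc, neg_mul]
  gcongr
  exact norm_setIntegral_Ioi_exp_neg_mul_smul_le hf hy

lemma laplace_eq_laplace_indicator_add (hf : IntegrableOn f (Ioi 0)) (hδ : 0 ≤ δ) (hy : 0 ≤ y) :
    laplace f y =
      laplace ((Ioc 0 δ).indicator f) y + ∫ x in Ioi δ, exp (-(x * y)) • f x := by
  have hint := integrableOn_exp_neg_mul_smul hf hy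
  have hnear : laplace ((Ioc 0 δ).indicator f) y = ∫ x in Ioc 0 δ, exp (-(x * y)) • f x := by
    simp only [laplace, ← indicator_smul_apply (Ioc 0 δ) (fun x ↦ exp (-(x * y)))]
    rw [setIntegral_indicator measurableSet_Ioc, inter_eq_right.2 Ioc_subset_Ioi_self]
  rw [hnear, ← setIntegral_union Ioc_disjoint_Ioi_same measurableSet_Ioi
    (hint.mono_set Ioc_subset_Ioi_self) (hint.mono_set (Ioi_subset_Ioi hδ)),
    Ioc_union_Ioi_eq_Ioi hδ, laplace]

/-- Watson's lemma: only the germ of `h` at `0` matters, because cutting the Laplace integral off at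
`δ > 0` costs an exponentially small error. -/
theorem tendsto_rpow_smul_laplace [CompleteSpace E] (ha : -1 < a)
    (hf : IntegrableOn (fun x ↦ x ^ a • h x) (Ioi 0)) (hc : Tendsto h (𝓝[>] 0) (𝓝 c)) :
    Tendsto (fun y ↦ y ^ (a + 1) • laplace (fun x ↦ x ^ a • h x) y) atTop
      (𝓝 (Gamma (a + 1) • c)) := by
  obtain ⟨δ, hδ, hbound⟩ : ∃ δ > 0, Ioc 0 δ ⊆ {x | ‖h x‖ ≤ ‖c‖ + 1} :=
    mem_nhdsGT_iff_exists_Ioc_subset.1 (hc.norm.eventually_le_const (lt_add_one _))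
  have hcut : (Ioc 0 δ).indicator (fun x ↦ x ^ a • h x) =
      fun x ↦ x ^ a • (Ioc 0 δ).indicator h x := indicator_smul _ _ _
  have hnear : Tendsto (fun y ↦ y ^ (a + 1) • laplace (fun x ↦ x ^ a • (Ioc 0 δ).indicator h x) y)
      atTop (𝓝 (Gamma (a + 1) • c)) := by
    refine tendsto_rpow_smul_laplace_of_norm_le ha (hcut ▸ hf.indicator measurableSet_Ioc)
      (M := ‖c‖ + 1) (fun x ↦ ?_) (hc.congr' ?_)
    · by_cases hx : x ∈ Ioc 0 δ
      · rw [indicator_of_mem hx]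
        exact hbound hx
      · rw [indicator_of_notMem hx, norm_zero]
        positivity
    · filter_upwards [Ioc_mem_nhdsGT hδ] with x hx using (indicator_of_mem hx h).symm
  have hfar := tendsto_rpow_smul_setIntegral_Ioi_exp_neg_mul
    (hf.mono_set (Ioi_subset_Ioi (le_of_lt hδ))) hδ (a + 1)
  have hsum := hnear.add hfar
  rw [add_zero] at hsum
  refine hsum.congr' ?_
  filter_upwards [eventually_ge_atTop 0] with y hy
  rw [laplace_eq_laplace_indicator_add hf (le_of_lt hδ) hy, hcut, smul_add]

lemma setIntegral_Ioi_rpow_mul_exp_neg_mul (hs : 0 < s) {x : ℝ} (hx : 0 < x) :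
    ∫ y in Ioi 0, y ^ (s - 1) * exp (-(x * y)) = Gamma s * x ^ (-s) := by
  rw [integral_rpow_mul_exp_neg_mul_Ioi hs hx, one_div, inv_rpow hx.le, rpow_neg hx.le, mul_comm]

lemma integrableOn_Ioi_rpow_mul_exp_neg_mul (hs : 0 < s) {x : ℝ} (hx : 0 < x) :
    IntegrableOn (fun y ↦ y ^ (s - 1) * exp (-(x * y))) (Ioi 0) := by
  simpa only [rpow_one, neg_mul] using
    integrableOn_rpow_mul_exp_neg_mul_rpow (s := s - 1) (by linarith) one_pos hx

lemma integrable_prod_rpow_mul_exp_neg_mul_smul (hs : 0 < s)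
    (hf : AEStronglyMeasurable f (volume.restrict (Ioi 0)))
    (hfs : IntegrableOn (fun x ↦ x ^ (-s) • f x) (Ioi 0)) :
    Integrable (fun p : ℝ × ℝ ↦ (p.2 ^ (s - 1) * exp (-(p.1 * p.2))) • f p.1)
      ((volume.restrict (Ioi 0)).prod (volume.restrict (Ioi 0))) := by
  have hmeas : AEStronglyMeasurable
      (fun p : ℝ × ℝ ↦ (p.2 ^ (s - 1) * exp (-(p.1 * p.2))) • f p.1)
      ((volume.restrict (Ioi 0)).prod (volume.restrict (Ioi 0))) :=
    AEStronglyMeasurable.smul (Measurable.aestronglyMeasurable (by fun_prop)) hf.comp_fst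
  refine (integrable_prod_iff hmeas).2 ⟨?_, ?_⟩
  · filter_upwards [ae_restrict_mem measurableSet_Ioi] with x hx
    exact (integrableOn_Ioi_rpow_mul_exp_neg_mul hs hx).smul_const _
  · refine (hfs.norm.const_mul (Gamma s)).congr ?_
    filter_upwards [ae_restrict_mem measurableSet_Ioi] with x hx
    have hx : 0 < x := hx
    rw [norm_smul, norm_of_nonneg (by positivity), ← mul_assoc,
      ← setIntegral_Ioi_rpow_mul_exp_neg_mul hs hx, ← integral_mul_const]
    refine setIntegral_congr_fun measurableSet_Ioi fun y hy ↦ ?_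
    have hy : 0 < y := hy
    rw [norm_smul, norm_of_nonneg (by positivity)]

lemma integrableOn_rpow_smul_laplace (hs : 0 < s)
    (hf : AEStronglyMeasurable f (volume.restrict (Ioi 0)))
    (hfs : IntegrableOn (fun x ↦ x ^ (-s) • f x) (Ioi 0)) :
    IntegrableOn (fun y ↦ y ^ (s - 1) • laplace f y) (Ioi 0) := by
  simpa only [IntegrableOn, laplace, ← integral_smul, smul_smul] using
    (integrable_prod_rpow_mul_exp_neg_mul_smul hs hf hfs).integral_prod_right

theorem setIntegral_rpow_smul_laplace [CompleteSpace E] (hs : 0 < s)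
    (hf : AEStronglyMeasurable f (volume.restrict (Ioi 0)))
    (hfs : IntegrableOn (fun x ↦ x ^ (-s) • f x) (Ioi 0)) :
    ∫ y in Ioi 0, y ^ (s - 1) • laplace f y = Gamma s • ∫ x in Ioi 0, x ^ (-s) • f x := by
  simp only [laplace, ← integral_smul, smul_smul]
  rw [← integral_integral_swap (integrable_prod_rpow_mul_exp_neg_mul_smul hs hf hfs)]
  refine setIntegral_congr_fun measurableSet_Ioi fun x hx ↦ ?_
  rw [integral_smul_const, setIntegral_Ioi_rpow_mul_exp_neg_mul hs hx]

end Laplace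

section Tail

variable {E : Type*} [NormedAddCommGroup E] [NormedSpace ℝ E] {f : ℝ → E} {b s : ℝ} {c : E}

lemma rpow_smul_setIntegral_Ioi (f : ℝ → E) (s : ℝ) {T : ℝ} (hT : 0 < T) :
    T ^ s • ∫ y in Ioi T, f y =
      ∫ u in Ioi 1, u ^ (-(s + 1)) • (T * u) ^ (s + 1) • f (T * u) := by
  have hscale := integral_comp_mul_left_Ioi' f 1 hT
  rw [mul_one] at hscale
  rw [← hscale, smul_smul, ← rpow_add_one hT.ne', ← integral_smul]
  refine setIntegral_congr_fun measurableSet_Ioi fun u hu ↦ ?_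
  have hu : 0 < u := one_pos.trans hu
  simp only [smul_smul]
  rw [mul_rpow hT.le hu.le, rpow_neg hu.le]
  congr 1
  field_simp

theorem tendsto_rpow_smul_setIntegral_Ioi [CompleteSpace E] (hs : 0 < s)
    (hf : IntegrableOn f (Ioi b)) (hc : Tendsto (fun y ↦ y ^ (s + 1) • f y) atTop (𝓝 c)) :
    Tendsto (fun T ↦ T ^ s • ∫ y in Ioi T, f y) atTop (𝓝 (s⁻¹ • c)) := by
  have hlimit : s⁻¹ • c = ∫ u in Ioi (1 : ℝ), u ^ (-(s + 1)) • c := by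
    rw [integral_smul_const, integral_Ioi_rpow_of_lt (by linarith) one_pos, one_rpow]
    rw [neg_add, neg_add_cancel_right, neg_div_neg_eq, one_div]
  obtain ⟨y₀, hy₀⟩ := eventually_atTop.1 (hc.norm.eventually_le_const (lt_add_one _))
  rw [hlimit]
  refine Tendsto.congr' ((eventually_gt_atTop 0).mono
    fun T hT ↦ (rpow_smul_setIntegral_Ioi f s hT).symm) ?_
  refine tendsto_integral_filter_of_dominated_convergence
    (fun u ↦ u ^ (-(s + 1)) * (‖c‖ + 1)) ?_ ?_
    ((integrableOn_Ioi_rpow_of_lt (by linarith) one_pos).mul_const _) ?_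
  · filter_upwards [eventually_gt_atTop 0, eventually_ge_atTop b] with T hT hTb
    have hcomp : IntegrableOn (fun u ↦ f (T * u)) (Ioi 1) :=
      (integrableOn_Ioi_comp_mul_left_iff f 1 hT).2
        (hf.mono_set (Ioi_subset_Ioi (by rwa [mul_one])))
    have hpow : Measurable fun u : ℝ ↦ (T * u) ^ (s + 1) := by fun_prop
    exact .smul (by fun_prop) (hpow.aestronglyMeasurable.smul hcomp.aestronglyMeasurable)
  · filter_upwards [eventually_ge_atTop y₀, eventually_ge_atTop 0] with T hT hT0
    filter_upwards [ae_restrict_mem measurableSet_Ioi] with u hu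
    have hu : 1 < u := hu
    rw [norm_smul, norm_of_nonneg (by positivity)]
    gcongr
    exact hy₀ _ (hT.trans (le_mul_of_one_le_right hT0 hu.le))
  · filter_upwards [ae_restrict_mem measurableSet_Ioi] with u hu
    have hu : 0 < u := one_pos.trans hu
    exact (hc.comp (tendsto_id.atTop_mul_const hu)).const_smul _

end Tail

section BetaKernel

variable {c s u v x : ℝ}

/-- The beta density on `(0, c)` without its normalising constant; it vanishes outside `(0, c)`. -/
noncomputable def betaKernel (c u v : ℝ) : ℝ → ℝ :=
  (Ioo 0 c).indicator fun x ↦ x ^ (u - 1) * (c - x) ^ (v - 1)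

lemma betaKernel_of_mem (u v : ℝ) (hx : x ∈ Ioo 0 c) :
    betaKernel c u v x = x ^ (u - 1) * (c - x) ^ (v - 1) :=
  indicator_of_mem hx _

lemma betaKernel_of_notMem (u v : ℝ) (hx : x ∉ Ioo 0 c) : betaKernel c u v x = 0 :=
  indicator_of_notMem hx _

lemma betaKernel_nonneg (c u v x : ℝ) : 0 ≤ betaKernel c u v x :=
  indicator_nonneg (fun _ hx ↦ mul_nonneg (rpow_nonneg hx.1.le _)
    (rpow_nonneg (sub_nonneg.2 hx.2.le) _)) x

lemma measurable_betaKernel (c u v : ℝ) : Measurable (betaKernel c u v) :=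
  Measurable.indicator (by fun_prop) measurableSet_Ioo

lemma betaKernel_sub (c u v x : ℝ) : betaKernel c u v (c - x) = betaKernel c v u x := by
  by_cases hx : x ∈ Ioo 0 c
  · rw [betaKernel_of_mem _ _ hx, betaKernel_of_mem _ _ ⟨sub_pos.2 hx.2, sub_lt_self c hx.1⟩,
      sub_sub_cancel, mul_comm]
  · rw [betaKernel_of_notMem _ _ hx, betaKernel_of_notMem]
    exact fun hx' ↦ hx ⟨sub_lt_self_iff c |>.1 hx'.2, sub_pos.1 hx'.1⟩

lemma rpow_mul_betaKernel (c s u v x : ℝ) :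
    x ^ s * betaKernel c u v x = betaKernel c (s + u) v x := by
  by_cases hx : x ∈ Ioo 0 c
  · rw [betaKernel_of_mem _ _ hx, betaKernel_of_mem _ _ hx, ← mul_assoc, ← rpow_add hx.1,
      add_sub_assoc]
  · rw [betaKernel_of_notMem _ _ hx, betaKernel_of_notMem _ _ hx, mul_zero]

lemma betaKernel_const_mul (u v x : ℝ) (hc : 0 < c) :
    betaKernel c u v (c * x) = c ^ (u + v - 2) * betaKernel 1 u v x := by
  have hmem : c * x ∈ Ioo 0 c ↔ x ∈ Ioo 0 1 := by
    simp only [mem_Ioo, mul_pos_iff_of_pos_left hc, mul_lt_iff_lt_one_right hc]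
  by_cases hx : x ∈ Ioo 0 1
  · rw [betaKernel_of_mem _ _ hx, betaKernel_of_mem _ _ (hmem.2 hx), mul_rpow hc.le hx.1.le,
      ← mul_one_sub, mul_rpow hc.le (sub_nonneg.2 hx.2.le),
      show u + v - 2 = (u - 1) + (v - 1) by ring, rpow_add hc]
    ring
  · rw [betaKernel_of_notMem _ _ hx, betaKernel_of_notMem _ _ (mt hmem.1 hx), mul_zero]

open ProbabilityTheory

lemma betaKernel_one (hu : 0 < u) (hv : 0 < v) (x : ℝ) :
    betaKernel 1 u v x = beta u v * betaPDFReal u v x := by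
  by_cases hx : x ∈ Ioo 0 1
  · rw [betaKernel_of_mem _ _ hx, betaPDFReal, if_pos ⟨hx.1, hx.2⟩]
    field_simp [(beta_pos hu hv).ne']
  · rw [betaKernel_of_notMem _ _ hx, betaPDFReal, if_neg (show ¬(0 < x ∧ x < 1) from hx),
      mul_zero]

lemma betaPDFReal_nonneg (hu : 0 < u) (hv : 0 < v) (x : ℝ) : 0 ≤ betaPDFReal u v x :=
  nonneg_of_mul_nonneg_right (betaKernel_one hu hv x ▸ betaKernel_nonneg 1 u v x) (beta_pos hu hv)

lemma integrable_betaPDFReal (hu : 0 < u) (hv : 0 < v) : Integrable (betaPDFReal u v) := by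
  refine (lintegral_ofReal_ne_top_iff_integrable
    (measurable_betaPDFReal u v).aestronglyMeasurable (.of_forall (betaPDFReal_nonneg hu hv))).1 ?_
  exact (lintegral_betaPDF_eq_one hu hv).trans_ne ENNReal.one_ne_top

lemma integral_betaPDFReal (hu : 0 < u) (hv : 0 < v) : ∫ x, betaPDFReal u v x = 1 := by
  rw [integral_eq_lintegral_of_nonneg_ae (.of_forall (betaPDFReal_nonneg hu hv))
    (measurable_betaPDFReal u v).aestronglyMeasurable]
  exact (congrArg ENNReal.toReal (lintegral_betaPDF_eq_one hu hv)).trans ENNReal.toReal_one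

lemma integrable_betaKernel (hc : 0 < c) (hu : 0 < u) (hv : 0 < v) :
    Integrable (betaKernel c u v) := by
  refine (integrable_comp_mul_left_iff _ hc.ne').1 ?_
  simp only [betaKernel_const_mul u v _ hc, betaKernel_one hu hv]
  exact ((integrable_betaPDFReal hu hv).const_mul _).const_mul _

lemma integral_betaKernel (hc : 0 < c) (hu : 0 < u) (hv : 0 < v) :
    ∫ x, betaKernel c u v x = c ^ (u + v - 1) * beta u v := by
  have hscale := Measure.integral_comp_mul_left (betaKernel c u v) c
  simp only [betaKernel_const_mul u v _ hc, betaKernel_one hu hv, integral_const_mul,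
    integral_betaPDFReal hu hv, smul_eq_mul, abs_inv, abs_of_pos hc] at hscale
  rw [eq_inv_mul_iff_mul_eq₀ hc.ne'] at hscale
  rw [← hscale, show u + v - 1 = (u + v - 2) + 1 by ring, rpow_add_one hc.ne']
  ring

lemma setIntegral_Ioi_betaKernel_mul (c u v : ℝ) (g : ℝ → ℝ) :
    ∫ x in Ioi 0, betaKernel c u v x * g x = ∫ x, betaKernel c u v x * g x :=
  setIntegral_eq_integral_of_forall_compl_eq_zero fun x hx ↦ by
    rw [betaKernel_of_notMem _ _ fun hx' ↦ hx hx'.1, zero_mul]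

lemma integrable_betaKernel_mul (hc : 0 < c) (hu : 0 < u) (hv : 0 < v) {g : ℝ → ℝ}
    (hg : Continuous g) : Integrable fun x ↦ betaKernel c u v x * g x := by
  refine (integrableOn_iff_integrable_of_support_subset (s := Icc 0 c) ?_).1 <|
    (integrable_betaKernel hc hu hv).integrableOn.mul_continuousOn hg.continuousOn isCompact_Icc
  refine Function.support_subset_iff'.2 fun x hx ↦ ?_
  rw [betaKernel_of_notMem _ _ fun hx' ↦ hx (Ioo_subset_Icc_self hx'), zero_mul]

lemma betaKernel_eq_rpow_smul (hx : 0 < x) :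
    betaKernel c u v x = x ^ (u - 1) • (Iio c).indicator (fun x ↦ (c - x) ^ (v - 1)) x := by
  by_cases hxc : x < c
  · rw [betaKernel_of_mem _ _ ⟨hx, hxc⟩, indicator_of_mem (mem_Iio.2 hxc), smul_eq_mul]
  · rw [betaKernel_of_notMem _ _ fun hx' ↦ hxc hx'.2,
      indicator_of_notMem (notMem_Iio.2 (not_lt.1 hxc)), smul_zero]

lemma tendsto_rpow_mul_laplace_betaKernel (hc : 0 < c) (hu : 0 < u) (hv : 0 < v) :
    Tendsto (fun y ↦ y ^ u * laplace (betaKernel c u v) y) atTop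
      (𝓝 (Gamma u * c ^ (v - 1))) := by
  have hzero : Tendsto ((Iio c).indicator fun x ↦ (c - x) ^ (v - 1)) (𝓝[>] 0)
      (𝓝 (c ^ (v - 1))) := by
    have hcont : ContinuousAt (fun x : ℝ ↦ (c - x) ^ (v - 1)) 0 :=
      ContinuousAt.rpow_const (by fun_prop) (.inl (by simpa using hc.ne'))
    have hlim := hcont.tendsto.mono_left (nhdsWithin_le_nhds (s := Ioi 0))
    rw [sub_zero] at hlim
    refine hlim.congr' ?_
    filter_upwards [Ioo_mem_nhdsGT hc] with x hx
    exact (indicator_of_mem (mem_Iio.2 hx.2) fun x ↦ (c - x) ^ (v - 1)).symm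
  have heq : EqOn (betaKernel c u v)
      (fun x ↦ x ^ (u - 1) • (Iio c).indicator (fun x ↦ (c - x) ^ (v - 1)) x) (Ioi 0) :=
    fun x hx ↦ betaKernel_eq_rpow_smul hx
  have hwatson := tendsto_rpow_smul_laplace (by linarith)
    ((integrable_betaKernel hc hu hv).integrableOn.congr_fun heq measurableSet_Ioi) hzero
  simp only [sub_add_cancel, smul_eq_mul] at hwatson
  refine hwatson.congr fun y ↦ ?_
  congr 1
  exact setIntegral_congr_fun measurableSet_Ioi fun x hx ↦ by rw [heq hx]; rfl

lemma integrableOn_rpow_mul_laplace_betaKernel (hc : 0 < c) (hs : 0 < s) (hsu : s < u)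
    (hv : 0 < v) : IntegrableOn (fun y ↦ y ^ (s - 1) * laplace (betaKernel c u v) y) (Ioi 0) := by
  refine integrableOn_rpow_smul_laplace hs (measurable_betaKernel c u v).aestronglyMeasurable ?_
  simp only [smul_eq_mul, rpow_mul_betaKernel]
  exact (integrable_betaKernel hc (by linarith) hv).integrableOn

lemma setIntegral_rpow_mul_laplace_betaKernel (hc : 0 < c) (hs : 0 < s) (hsu : s < u)
    (hv : 0 < v) :
    ∫ y in Ioi 0, y ^ (s - 1) * laplace (betaKernel c u v) y =
      Gamma s * (c ^ (u - s + v - 1) * beta (u - s) v) := by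
  have hus : 0 < -s + u := by linarith
  have hint := setIntegral_rpow_smul_laplace hs (f := betaKernel c u v)
    (measurable_betaKernel c u v).aestronglyMeasurable
    (by simpa only [smul_eq_mul, rpow_mul_betaKernel] using
      (integrable_betaKernel hc hus hv).integrableOn)
  simp only [smul_eq_mul, rpow_mul_betaKernel] at hint
  have hbeta := setIntegral_Ioi_betaKernel_mul c (-s + u) v 1
  simp only [Pi.one_apply, mul_one] at hbeta
  rw [hint, hbeta, integral_betaKernel hc hus hv, neg_add_eq_sub]

end BetaKernel

section PoissonRepresentation

variable {v y ν : ℝ}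

open ProbabilityTheory
open scoped Nat

lemma betaKernel_mul_mul_sqrt_pow (c u v y s : ℝ) (j : ℕ) :
    betaKernel c u v s * (y * √s) ^ (2 * j) = y ^ (2 * j) * betaKernel c (j + u) v s := by
  by_cases hs : s ∈ Ioo 0 c
  · rw [← rpow_mul_betaKernel, rpow_natCast, mul_pow, pow_mul √s, sq_sqrt hs.1.le]
    ring
  · rw [betaKernel_of_notMem _ _ hs, betaKernel_of_notMem _ _ hs, zero_mul, mul_zero]

lemma hasSum_integral_betaKernel_one_mul_cosh {u : ℝ} (hu : 0 < u) (hv : 0 < v) (y : ℝ) :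
    HasSum (fun j : ℕ ↦ y ^ (2 * j) / (2 * j)! * beta (j + u) v)
      (∫ s, betaKernel 1 u v s * cosh (y * √s)) := by
  have hseries (s : ℝ) : HasSum (fun j : ℕ ↦ y ^ (2 * j) / (2 * j)! * betaKernel 1 (j + u) v s)
      (betaKernel 1 u v s * cosh (y * √s)) := by
    refine ((Real.hasSum_cosh (y * √s)).mul_left (betaKernel 1 u v s)).congr_fun fun j ↦ ?_
    rw [← mul_div_assoc, betaKernel_mul_mul_sqrt_pow, mul_div_right_comm]
  have hnonneg (j : ℕ) (s : ℝ) : 0 ≤ y ^ (2 * j) / (2 * j)! * betaKernel 1 (j + u) v s :=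
    mul_nonneg (div_nonneg ((even_two_mul j).pow_nonneg y) (Nat.cast_nonneg _))
      (betaKernel_nonneg 1 _ v s)
  have hterm (j : ℕ) : ∫ s, y ^ (2 * j) / (2 * j)! * betaKernel 1 (j + u) v s =
      y ^ (2 * j) / (2 * j)! * beta (j + u) v := by
    rw [integral_const_mul, integral_betaKernel one_pos (by positivity) hv, one_rpow, one_mul]
  simp only [← hterm]
  refine hasSum_integral_of_dominated_convergence
    (fun j s ↦ y ^ (2 * j) / (2 * j)! * betaKernel 1 (j + u) v s)
    (fun j ↦ ((measurable_betaKernel _ _ _).const_mul _).aestronglyMeasurable)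
    (fun j ↦ .of_forall fun s ↦ (norm_of_nonneg (hnonneg j s)).le)
    (.of_forall fun s ↦ (hseries s).summable) ?_ (.of_forall hseries)
  simp only [(hseries _).tsum_eq]
  exact integrable_betaKernel_mul one_pos hu hv (by fun_prop)

lemma mul_betaKernel_one_half_sq {u : ℝ} (hu : 0 < u) (v : ℝ) :
    u * betaKernel 1 (1 / 2) v (u ^ 2) = betaKernel 2 v v (1 + u) := by
  have hmem : 1 + u ∈ Ioo 0 2 ↔ u ^ 2 ∈ Ioo 0 1 := by
    simp only [mem_Ioo, sq_lt_one_iff₀ hu.le, pow_pos hu, true_and]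
    exact ⟨fun h ↦ by linarith [h.2], fun h ↦ ⟨by linarith, by linarith⟩⟩
  by_cases hsq : u ^ 2 ∈ Ioo 0 1
  · have hu1 : 0 ≤ 1 - u := by linarith [(hmem.2 hsq).2]
    rw [betaKernel_of_mem _ _ hsq, betaKernel_of_mem _ _ (hmem.2 hsq),
      ← mul_rpow (by positivity) (by linarith), ← rpow_natCast, ← rpow_mul hu.le,
      show ((2 : ℕ) : ℝ) * (1 / 2 - 1) = -1 by norm_num, rpow_neg_one, rpow_natCast,
      show (1 + u) * (2 - (1 + u)) = 1 - u ^ 2 by ring]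
    field_simp
  · rw [betaKernel_of_notMem _ _ hsq, betaKernel_of_notMem _ _ (mt hmem.1 hsq), mul_zero]

lemma betaKernel_two_one_add_abs (v u : ℝ) :
    betaKernel 2 v v (1 + |u|) = betaKernel 2 v v (1 + u) := by
  rcases abs_choice u with h | h
  · rw [h]
  · rw [h, ← betaKernel_sub]
    congr 1
    ring

lemma integral_betaKernel_two_one_add_mul_comp_abs (v : ℝ) (g : ℝ → ℝ) :
    ∫ u, betaKernel 2 v v (1 + u) * g |u| = ∫ s, betaKernel 1 (1 / 2) v s * g √s := by
  have hsubst := integral_comp_rpow_Ioi_of_pos (g := fun s ↦ betaKernel 1 (1 / 2) v s * g √s)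
    two_pos
  have hfold := integral_comp_abs (f := fun u ↦ betaKernel 2 v v (1 + u) * g u)
  simp only [betaKernel_two_one_add_abs] at hfold
  rw [hfold, ← setIntegral_Ioi_betaKernel_mul, ← hsubst, ← integral_const_mul]
  refine setIntegral_congr_fun measurableSet_Ioi fun u hu ↦ ?_
  have hu : 0 < u := hu
  simp only [rpow_two, sqrt_sq hu.le, smul_eq_mul]
  rw [← mul_betaKernel_one_half_sq hu, show (2 : ℝ) - 1 = 1 by norm_num, rpow_one]
  ring

lemma exp_mul_laplace_betaKernel_two (v y : ℝ) :
    exp y * laplace (betaKernel 2 v v) y = ∫ u, betaKernel 2 v v (1 + u) * exp (-(y * u)) := by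
  have hshift := integral_add_left_eq_self (μ := volume)
    (fun x ↦ betaKernel 2 v v x * exp (-(y * (x - 1)))) 1
  simp only [add_sub_cancel_left] at hshift
  rw [hshift, laplace, ← integral_const_mul, ← setIntegral_Ioi_betaKernel_mul]
  refine setIntegral_congr_fun measurableSet_Ioi fun x _ ↦ ?_
  simp only [smul_eq_mul]
  rw [show -(y * (x - 1)) = y + -(x * y) by ring, exp_add]
  ring

lemma integral_betaKernel_two_one_add_mul_cosh (hv : 0 < v) (y : ℝ) :
    ∫ u, betaKernel 2 v v (1 + u) * cosh (y * u) = exp y * laplace (betaKernel 2 v v) y := by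
  have hint (z : ℝ) : Integrable fun u ↦ betaKernel 2 v v (1 + u) * exp (z * u) := by
    simpa only [add_sub_cancel_left] using
      (integrable_betaKernel_mul two_pos hv hv
        (g := fun x ↦ exp (z * (x - 1))) (by fun_prop)).comp_add_left 1
  have heven : ∫ u, betaKernel 2 v v (1 + u) * exp (y * u) =
      ∫ u, betaKernel 2 v v (1 + u) * exp (-y * u) := by
    rw [← integral_neg_eq_self]
    refine integral_congr_ae (.of_forall fun u ↦ ?_)
    simp only [← betaKernel_two_one_add_abs v (-u), abs_neg, betaKernel_two_one_add_abs, mul_neg,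
      neg_mul]
  simp only [exp_mul_laplace_betaKernel_two, cosh_eq, ← neg_mul, mul_div_assoc', mul_add]
  rw [integral_div, integral_add (hint y) (hint (-y)), heven, add_self_div_two]

lemma beta_natCast_add_half_div_factorial (j : ℕ) (w : ℝ) :
    beta (j + 1 / 2) (w + 1 / 2) / (2 * j)! =
      √π * Gamma (w + 1 / 2) / (4 ^ j * (j ! * Gamma (w + j + 1))) := by
  have hdup := Gamma_mul_Gamma_add_half (j + 1 / 2)
  rw [show (j : ℝ) + 1 / 2 + 1 / 2 = j + 1 by ring, Real.Gamma_nat_eq_factorial,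
    show 2 * ((j : ℝ) + 1 / 2) = ((2 * j : ℕ) : ℝ) + 1 by push_cast; ring,
    Real.Gamma_nat_eq_factorial,
    sub_add_cancel_right, rpow_neg two_pos.le, rpow_natCast, pow_mul,
    show (2 : ℝ) ^ 2 = 4 by norm_num] at hdup
  have hGamma : Gamma (j + 1 / 2) / (2 * j)! = √π / (4 ^ j * j !) := by
    rw [div_eq_div_iff (by positivity) (by positivity), mul_left_comm, hdup]
    field_simp
  rw [beta, show (j : ℝ) + 1 / 2 + (w + 1 / 2) = w + j + 1 by ring, div_right_comm,
    mul_div_right_comm, hGamma]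
  ring

theorem exp_neg_mul_besselI (hν : -(1 / 2) < ν) (hy : 0 < y) :
    exp (-y) * besselI ν y = (y / 2) ^ ν / (√π * Gamma (ν + 1 / 2)) *
      laplace (betaKernel 2 (ν + 1 / 2) (ν + 1 / 2)) y := by
  have hv : 0 < ν + 1 / 2 := by linarith
  have hpos : 0 < √π * Gamma (ν + 1 / 2) := by positivity
  have hterm (j : ℕ) : (y / 2) ^ (ν + 2 * (j : ℝ)) / (j ! * Gamma (ν + j + 1)) =
      (y / 2) ^ ν / (√π * Gamma (ν + 1 / 2)) *
        (y ^ (2 * j) / (2 * j)! * beta (j + 1 / 2) (ν + 1 / 2)) := by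
    rw [div_mul_comm (y ^ (2 * j)), beta_natCast_add_half_div_factorial, rpow_add (half_pos hy),
      show 2 * (j : ℝ) = ((2 * j : ℕ) : ℝ) by push_cast; rfl, rpow_natCast, div_pow y, pow_mul 2,
      show (2 : ℝ) ^ 2 = 4 by norm_num]
    generalize √π * Gamma (ν + 1 / 2) = C at hpos
    field_simp
  have hcosh : ∫ s, betaKernel 1 (1 / 2) (ν + 1 / 2) s * cosh (y * √s) =
      exp y * laplace (betaKernel 2 (ν + 1 / 2) (ν + 1 / 2)) y := by
    rw [← integral_betaKernel_two_one_add_mul_cosh hv,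
      ← integral_betaKernel_two_one_add_mul_comp_abs (ν + 1 / 2) fun u ↦ cosh (y * u)]
    refine integral_congr_ae (.of_forall fun u ↦ ?_)
    simp only
    rw [← cosh_abs (y * |u|), abs_mul, abs_abs, ← abs_mul, cosh_abs]
  have hseries := hasSum_integral_betaKernel_one_mul_cosh one_half_pos hv y
  rw [hcosh] at hseries
  simp only [besselI, hterm]
  rw [(hseries.mul_left _).tsum_eq, mul_left_comm, ← mul_assoc (exp (-y)), ← exp_add,
    neg_add_cancel, exp_zero, one_mul]

end PoissonRepresentation

section BesselAsymptotics

variable {s y ν : ℝ}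

open ProbabilityTheory

lemma rpow_mul_exp_neg_mul_besselI (hν : -(1 / 2) < ν) (hy : 0 < y) (s : ℝ) :
    y ^ s * (exp (-y) * besselI ν y) = (2 ^ ν * (√π * Gamma (ν + 1 / 2)))⁻¹ *
      (y ^ (s + ν) * laplace (betaKernel 2 (ν + 1 / 2) (ν + 1 / 2)) y) := by
  rw [exp_neg_mul_besselI hν hy, div_rpow hy.le two_pos.le, rpow_add hy, mul_inv]
  ring

lemma tendsto_rpow_mul_exp_neg_mul_besselI (hν : -(1 / 2) < ν) :
    Tendsto (fun y ↦ y ^ (1 / 2 : ℝ) * (exp (-y) * besselI ν y)) atTop (𝓝 (√(2 * π))⁻¹) := by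
  have hv : 0 < ν + 1 / 2 := by linarith
  have hΓ : Gamma (ν + 1 / 2) ≠ 0 := (Gamma_pos_of_pos hv).ne'
  have hlimit : (2 ^ ν * (√π * Gamma (ν + 1 / 2)))⁻¹ *
      (Gamma (ν + 1 / 2) * 2 ^ (ν + 1 / 2 - 1)) = (√(2 * π))⁻¹ := by
    rw [show ν + 1 / 2 - 1 = ν - 1 / 2 by ring, rpow_sub two_pos, ← sqrt_eq_rpow,
      sqrt_mul two_pos.le]
    generalize Gamma (ν + 1 / 2) = C at hΓ
    field_simp
  rw [← hlimit]
  refine ((tendsto_rpow_mul_laplace_betaKernel two_pos hv hv).const_mul _).congr' ?_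
  filter_upwards [eventually_gt_atTop 0] with y hy
  rw [rpow_mul_exp_neg_mul_besselI hν hy, add_comm]

lemma integrableOn_rpow_mul_exp_neg_mul_besselI (hsν : 0 < s + ν) (hs : s < 1 / 2) :
    IntegrableOn (fun y ↦ y ^ (s - 1) * (exp (-y) * besselI ν y)) (Ioi 0) := by
  have hint := integrableOn_rpow_mul_laplace_betaKernel (u := ν + 1 / 2) (v := ν + 1 / 2)
    two_pos hsν (by linarith) (by linarith)
  refine IntegrableOn.congr_fun (hint.const_mul (2 ^ ν * (√π * Gamma (ν + 1 / 2)))⁻¹)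
    (fun y hy ↦ ?_) measurableSet_Ioi
  rw [rpow_mul_exp_neg_mul_besselI (by linarith) hy, sub_add_eq_add_sub]

theorem setIntegral_rpow_mul_exp_neg_mul_besselI (hsν : 0 < s + ν) (hs : s < 1 / 2) :
    ∫ y in Ioi 0, y ^ (s - 1) * (exp (-y) * besselI ν y) =
      Gamma (s + ν) * Gamma (1 / 2 - s) / (2 ^ s * √π * Gamma (ν + 1 - s)) := by
  have hΓ : Gamma (ν + 1 / 2) ≠ 0 := (Gamma_pos_of_pos (by linarith)).ne'
  have hmellin := setIntegral_rpow_mul_laplace_betaKernel (u := ν + 1 / 2) (v := ν + 1 / 2)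
    two_pos hsν (by linarith) (by linarith)
  rw [show ν + 1 / 2 - (s + ν) = 1 / 2 - s by ring,
    show 1 / 2 - s + (ν + 1 / 2) - 1 = ν - s by ring,
    rpow_sub two_pos, beta, show 1 / 2 - s + (ν + 1 / 2) = ν + 1 - s by ring] at hmellin
  have hcongr : ∫ y in Ioi 0, y ^ (s - 1) * (exp (-y) * besselI ν y) =
      ∫ y in Ioi 0, (2 ^ ν * (√π * Gamma (ν + 1 / 2)))⁻¹ *
        (y ^ (s + ν - 1) * laplace (betaKernel 2 (ν + 1 / 2) (ν + 1 / 2)) y) :=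
    setIntegral_congr_fun measurableSet_Ioi fun y hy ↦ by
      rw [rpow_mul_exp_neg_mul_besselI (by linarith) hy, sub_add_eq_add_sub]
  rw [hcongr, integral_const_mul, hmellin]
  generalize Gamma (ν + 1 / 2) = C at hΓ
  field_simp

end BesselAsymptotics

section CallPrice

variable {t ν : ℝ}

/-- The integrand of `rBes ν 1`, multiplied out so that its two terms are separately integrable on
`(0, ∞)`. -/
noncomputable def callDensity (ν y : ℝ) : ℝ :=
  (2 ^ ν * Gamma (1 + ν))⁻¹ * (y ^ (ν - 1) * exp (-(1 / 2 * y))) -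
    y⁻¹ * (exp (-y) * besselI ν y)

lemma rBes_one (ν : ℝ) (ht : 0 < t) : rBes ν 1 t = ν * ∫ y in (0 : ℝ)..t⁻¹, callDensity ν y := by
  have ht' : 0 ≤ t⁻¹ := (inv_pos.2 ht).le
  rw [rBes, one_rpow, mul_one, one_div, intervalIntegral.integral_of_le ht',
    intervalIntegral.integral_of_le ht']
  congr 1
  refine setIntegral_congr_fun measurableSet_Ioc fun y hy ↦ ?_
  simp only [callDensity]
  rw [rpow_sub_one hy.1.ne', show -(1 / 2 * y) = -y / (2 * 1) by ring,
    show exp (-y) = exp (-y / (2 * 1)) * exp (-(1 * y) / 2) by rw [← exp_add]; ring_nf]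
  ring

lemma integrableOn_inv_mul_exp_neg_mul_besselI (hν : 0 < ν) :
    IntegrableOn (fun y ↦ y⁻¹ * (exp (-y) * besselI ν y)) (Ioi 0) := by
  simpa only [zero_sub, rpow_neg_one] using
    integrableOn_rpow_mul_exp_neg_mul_besselI (s := 0) (by simpa using hν) one_half_pos

lemma integrableOn_callDensity (hν : 0 < ν) : IntegrableOn (callDensity ν) (Ioi 0) :=
  ((integrableOn_Ioi_rpow_mul_exp_neg_mul hν one_half_pos).const_mul _).sub
    (integrableOn_inv_mul_exp_neg_mul_besselI hν)

lemma setIntegral_callDensity (hν : 0 < ν) : ∫ y in Ioi 0, callDensity ν y = 0 := by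
  have hΓ : Gamma ν ≠ 0 := (Gamma_pos_of_pos hν).ne'
  have hpower : ∫ y in Ioi 0, (2 ^ ν * Gamma (1 + ν))⁻¹ * (y ^ (ν - 1) * exp (-(1 / 2 * y))) =
      ν⁻¹ := by
    rw [integral_const_mul, setIntegral_Ioi_rpow_mul_exp_neg_mul hν one_half_pos, one_div,
      inv_rpow two_pos.le, rpow_neg two_pos.le, inv_inv, add_comm 1, Gamma_add_one hν.ne']
    field_simp
  have hbessel := setIntegral_rpow_mul_exp_neg_mul_besselI (s := 0) (ν := ν)
    (by rwa [zero_add]) one_half_pos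
  simp only [zero_sub, zero_add, sub_zero, rpow_neg_one, rpow_zero, one_mul, Gamma_one_half_eq,
    Gamma_add_one hν.ne'] at hbessel
  simp only [callDensity]
  rw [integral_sub ((integrableOn_Ioi_rpow_mul_exp_neg_mul hν one_half_pos).const_mul _)
    (integrableOn_inv_mul_exp_neg_mul_besselI hν), hpower, hbessel]
  field_simp
  norm_num

lemma intervalIntegral_callDensity (hν : 0 < ν) {T : ℝ} (hT : 0 ≤ T) :
    ∫ y in (0 : ℝ)..T, callDensity ν y = -∫ y in Ioi T, callDensity ν y := by
  rw [eq_neg_iff_add_eq_zero, intervalIntegral.integral_interval_add_Ioi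
    (integrableOn_callDensity hν) ((integrableOn_callDensity hν).mono_set (Ioi_subset_Ioi hT)),
    setIntegral_callDensity hν]

lemma tendsto_rpow_mul_callDensity (hν : -(1 / 2) < ν) :
    Tendsto (fun y ↦ y ^ (1 / 2 + 1 : ℝ) * callDensity ν y) atTop (𝓝 (-(√(2 * π))⁻¹)) := by
  have hpower := (tendsto_rpow_mul_exp_neg_mul_atTop_nhds_zero (1 / 2 + ν) (1 / 2)
    one_half_pos).const_mul (2 ^ ν * Gamma (1 + ν))⁻¹
  have hlim := hpower.sub (tendsto_rpow_mul_exp_neg_mul_besselI hν)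
  rw [mul_zero, zero_sub] at hlim
  refine hlim.congr' ?_
  filter_upwards [eventually_gt_atTop 0] with y hy
  rw [callDensity, rpow_add_one hy.ne', rpow_sub_one hy.ne', rpow_add hy, neg_mul]
  field_simp

lemma tendsto_rpow_mul_setIntegral_Ioi_callDensity (hν : 0 < ν) :
    Tendsto (fun T ↦ T ^ (1 / 2 : ℝ) * ∫ y in Ioi T, callDensity ν y) atTop
      (𝓝 (-(2 / √(2 * π)))) := by
  have htail := tendsto_rpow_smul_setIntegral_Ioi one_half_pos (integrableOn_callDensity hν)
    (tendsto_rpow_mul_callDensity (by linarith))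
  simpa only [smul_eq_mul, one_div, inv_inv, mul_neg, ← div_eq_mul_inv] using htail

end CallPrice

theorem stmt_10 (ν : ℝ) (hν : 0 < ν) :
    Filter.Tendsto (fun t : ℝ => rBes ν 1 t / Real.sqrt t) (nhdsWithin 0 (Set.Ioi 0))
      (nhds (2 * ν / Real.sqrt (2 * Real.pi))) := by
  have htail := ((tendsto_rpow_mul_setIntegral_Ioi_callDensity hν).comp
    tendsto_inv_nhdsGT_zero).const_mul (-ν)
  rw [neg_mul_neg, mul_div_assoc', mul_comm ν] at htail
  refine htail.congr' ?_
  filter_upwards [self_mem_nhdsWithin] with t ht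
  have ht : 0 < t := ht
  rw [Function.comp_apply, ← sqrt_eq_rpow, sqrt_inv, rBes_one ν ht,
    intervalIntegral_callDensity hν (inv_pos.2 ht).le]
  ring
end
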